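/- Let F be a finite field with |F| = q > 3 and char F ≠ 2. Then for every n ≥ 1, 𝔏_n(q) ≤ |P_n(F)| ≤ 𝔘_n(q), where 𝔏_n and 𝔘_n are the recursively defined bounding functions. -/

import Mathlib

/-- `v q k r = q^{2(k−r)}((qʳ − 1) q^{r−1} + qʳ)`, the number of pairs `(x,y) ∈ Fᵏ × Fᵏ`
with `xᵀ A y = 0` for a rank-`r` matrix `A` over a field with `q` elements. -/
def vAux (q : ℤ) (k r : ℕ) : ℤ :=
  q ^ (2 * (k - r)) * ((q ^ r - 1) * q ^ (r - 1) + q ^ r)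

namespace Matrix

section Permanent

variable {R : Type*} [CommSemiring R]

theorem permanent_succ_column_zero {n : ℕ} (A : Matrix (Fin (n + 1)) (Fin (n + 1)) R) :
    A.permanent = ∑ i, A i 0 * (A.submatrix i.succAbove Fin.succ).permanent := by
  rw [permanent, Finset.univ_perm_fin_succ, ← Finset.univ_product_univ]
  simp only [Finset.sum_map, Equiv.toEmbedding_apply, Finset.sum_product]
  refine Finset.sum_congr rfl fun i _ => ?_
  cases i using Fin.cases with
  | zero => simp [permanent, Fin.prod_univ_succ, Finset.mul_sum]
  | succ i =>
    rw [← permanent_permute_cols i.cycleRange, permanent, Finset.mul_sum]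
    refine Finset.sum_congr rfl fun σ _ => ?_
    simp [Fin.prod_univ_succ, Fin.succAbove_cycleRange]

theorem permanent_succ_row_zero {n : ℕ} (A : Matrix (Fin (n + 1)) (Fin (n + 1)) R) :
    A.permanent = ∑ j, A 0 j * (A.submatrix Fin.succ j.succAbove).permanent := by
  rw [← permanent_transpose, permanent_succ_column_zero]
  refine Finset.sum_congr rfl fun j _ => ?_
  rw [← permanent_transpose, transpose_submatrix, transpose_transpose, transpose_apply]

/-- The square matrix with top left corner `a`, remaining first row `x`, remaining first column `y`
and lower right block `B`. -/
def bordered {n : ℕ} (a : R) (x y : Fin n → R) (B : Matrix (Fin n) (Fin n) R) :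
    Matrix (Fin (n + 1)) (Fin (n + 1)) R :=
  of (Fin.cons (Fin.cons a x) fun i => Fin.cons (y i) (B i))

section
variable {S : Type*} {n : ℕ} (a : S) (x y : Fin n → S) (B : Matrix (Fin n) (Fin n) S)

@[simp] theorem bordered_zero_zero : bordered a x y B 0 0 = a := rfl
@[simp] theorem bordered_zero_succ (j : Fin n) : bordered a x y B 0 j.succ = x j := rfl
@[simp] theorem bordered_succ_zero (i : Fin n) : bordered a x y B i.succ 0 = y i := rfl
@[simp] theorem bordered_succ_succ (i j : Fin n) :
    bordered a x y B i.succ j.succ = B i j := rfl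

end

/-- Every square matrix of positive size is bordered in a unique way. -/
def borderedEquiv (R : Type*) [CommSemiring R] (n : ℕ) :
    Matrix (Fin n) (Fin n) R × (Fin n → R) × (Fin n → R) × R ≃
      Matrix (Fin (n + 1)) (Fin (n + 1)) R where
  toFun p := bordered p.2.2.2 p.2.1 p.2.2.1 p.1
  invFun A := (A.submatrix Fin.succ Fin.succ, fun j => A 0 j.succ, fun i => A i.succ 0, A 0 0)
  left_inv _ := rfl
  right_inv A := by
    ext i j
    cases i using Fin.cases <;> cases j using Fin.cases <;> rfl

theorem bordered_self {n : ℕ} (A : Matrix (Fin (n + 1)) (Fin (n + 1)) R) :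
    bordered (A 0 0) (fun j => A 0 j.succ) (fun i => A i.succ 0)
      (A.submatrix Fin.succ Fin.succ) = A :=
  (borderedEquiv R n).right_inv A

theorem permanent_bordered {n : ℕ} (a : R) (x y : Fin n → R) (B : Matrix (Fin n) (Fin n) R) :
    (bordered a x y B).permanent = a * B.permanent + (bordered 0 x y B).permanent := by
  rw [permanent_succ_row_zero, permanent_succ_row_zero (bordered 0 x y B)]
  simp only [Fin.sum_univ_succ, bordered_zero_zero, bordered_zero_succ, zero_mul, zero_add]
  rfl

/-- The matrix of complementary permanental minors. -/
def padj {n : ℕ} (A : Matrix (Fin (n + 1)) (Fin (n + 1)) R) :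
    Matrix (Fin (n + 1)) (Fin (n + 1)) R :=
  of fun i j => (A.submatrix i.succAbove j.succAbove).permanent

theorem padj_apply {n : ℕ} (A : Matrix (Fin (n + 1)) (Fin (n + 1)) R) (i j : Fin (n + 1)) :
    A.padj i j = (A.submatrix i.succAbove j.succAbove).permanent := rfl

theorem permanent_bordered_zero {n : ℕ} (x y : Fin (n + 1) → R)
    (B : Matrix (Fin (n + 1)) (Fin (n + 1)) R) :
    (bordered 0 x y B).permanent = y ⬝ᵥ B.padj *ᵥ x := by
  rw [permanent_succ_row_zero, Fin.sum_univ_succ, bordered_zero_zero, zero_mul, zero_add]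
  simp only [bordered_zero_succ, dotProduct, mulVec, Finset.mul_sum, padj_apply]
  rw [Finset.sum_comm]
  refine Finset.sum_congr rfl fun j _ => ?_
  rw [permanent_succ_column_zero, Finset.mul_sum]
  refine Finset.sum_congr rfl fun i _ => ?_
  have : ((bordered 0 x y B).submatrix Fin.succ j.succ.succAbove).submatrix i.succAbove Fin.succ
      = B.submatrix i.succAbove j.succAbove := by
    ext k l
    simp
  rw [this]
  simp
  ring

theorem exists_perm_comp_eq {α β : Type*} {f g : α → β} (hf : f.Injective) (hg : g.Injective)
    (h : Set.range f = Set.range g) : ∃ σ : Equiv.Perm α, f ∘ σ = g := by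
  refine ⟨(Equiv.ofInjective g hg).trans ((Equiv.setCongr h.symm).trans
    (Equiv.ofInjective f hf).symm), ?_⟩
  ext a
  simp [Equiv.apply_ofInjective_symm]

theorem permanent_submatrix_congr {m α β : Type*} [Fintype m] [DecidableEq m] (A : Matrix α β R)
    {f f' : m → α} {g g' : m → β} (hf : f.Injective) (hf' : f'.Injective) (hg : g.Injective)
    (hg' : g'.Injective) (hff : Set.range f = Set.range f') (hgg : Set.range g = Set.range g') :
    (A.submatrix f g).permanent = (A.submatrix f' g').permanent := by
  obtain ⟨σ, rfl⟩ := exists_perm_comp_eq hf hf' hff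
  obtain ⟨τ, rfl⟩ := exists_perm_comp_eq hg hg' hgg
  rw [← permanent_permute_cols σ (A.submatrix f g),
    ← permanent_permute_rows τ ((A.submatrix f g).submatrix σ id)]
  rfl

theorem exists_range_eq_range_succAbove {n : ℕ} {f : Fin n → Fin (n + 1)} (hf : f.Injective) :
    ∃ i : Fin (n + 1), Set.range f = Set.range i.succAbove := by
  obtain ⟨i, hi⟩ : ∃ i, i ∉ Set.range f := by
    by_contra! h
    have := Fintype.card_le_of_surjective f h
    simp at this
  refine ⟨i, ?_⟩
  rw [Fin.range_succAbove]
  refine Set.eq_of_subset_of_ncard_le ?_ ?_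
  · rintro _ ⟨k, rfl⟩ rfl
    exact hi ⟨k, rfl⟩
  · rw [Set.ncard_compl]
    rw [← Set.image_univ, Set.ncard_image_of_injective _ hf]
    simp

theorem permanent_submatrix_eq_zero_of_padj_eq_zero {n : ℕ}
    {A : Matrix (Fin (n + 1)) (Fin (n + 1)) R} (hA : A.padj = 0) {f g : Fin n → Fin (n + 1)}
    (hf : f.Injective) (hg : g.Injective) : (A.submatrix f g).permanent = 0 := by
  obtain ⟨i, hi⟩ := exists_range_eq_range_succAbove hf
  obtain ⟨j, hj⟩ := exists_range_eq_range_succAbove hg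
  rw [permanent_submatrix_congr A hf Fin.succAbove_right_injective hg
    Fin.succAbove_right_injective hi hj]
  exact congr_fun₂ hA i j

end Permanent

end Matrix

namespace PermanentCount

open Matrix Finset

variable {F : Type*} [Field F] [Fintype F] [DecidableEq F]

theorem card_filter_dotProduct_eq_zero {k : ℕ} {r : Fin k → F} (hr : r ≠ 0) :
    #{y : Fin k → F | y ⬝ᵥ r = 0} * Fintype.card F = Fintype.card F ^ k := by
  let f : Module.Dual F (Fin k → F) := dotProductBilin F F r
  have hf : f ≠ 0 := by
    intro h
    obtain ⟨i, hi⟩ := Function.ne_iff.mp hr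
    apply hi
    simpa [f] using LinearMap.congr_fun h (Pi.single i 1)
  have h1 := Module.Dual.finrank_ker_add_one_of_ne_zero hf
  have := Fintype.ofFinite (LinearMap.ker f)
  have h2 := Module.card_eq_pow_finrank (K := F) (V := LinearMap.ker f)
  have h3 : #{y : Fin k → F | y ⬝ᵥ r = 0} = Fintype.card (LinearMap.ker f) := by
    refine (Fintype.card_of_subtype _ fun y => ?_).symm
    simp [f, dotProduct_comm]
  rw [h3, h2, ← pow_succ, h1, Module.finrank_fin_fun]

/-- The number of vectors killed by a matrix over a finite field. -/
def kerCard {k : ℕ} (M : Matrix (Fin k) (Fin k) F) : ℕ := #{x : Fin k → F | M *ᵥ x = 0}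

theorem card_filter_bilin_eq_zero {k : ℕ} (M : Matrix (Fin k) (Fin k) F) :
    (#{p : (Fin k → F) × (Fin k → F) × F | p.2.1 ⬝ᵥ M *ᵥ p.1 = 0} : ℤ) =
      (Fintype.card F : ℤ) ^ (2 * k) +
        kerCard M * (Fintype.card F : ℤ) ^ k * ((Fintype.card F : ℤ) - 1) := by
  have key (x : Fin k → F) : (#{y : Fin k → F | y ⬝ᵥ M *ᵥ x = 0} * Fintype.card F : ℤ) =
      (Fintype.card F : ℤ) ^ k + (if M *ᵥ x = 0 then 1 else 0) *
        ((Fintype.card F : ℤ) ^ k * ((Fintype.card F : ℤ) - 1)) := by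
    split_ifs with h
    · simp [h]
      ring
    · rw [zero_mul, add_zero]
      exact_mod_cast card_filter_dotProduct_eq_zero h
  simp only [card_filter, Fintype.sum_prod_type, Nat.cast_sum] at key ⊢
  calc _ = ∑ x : Fin k → F, (∑ y : Fin k → F,
        ((if y ⬝ᵥ M *ᵥ x = 0 then 1 else 0 : ℕ) : ℤ)) * Fintype.card F := by
        refine sum_congr rfl fun x _ => ?_
        rw [sum_mul]
        exact sum_congr rfl fun y _ => by simp [mul_comm]
    _ = _ := by
        simp only [key, sum_add_distrib, ← sum_mul, sum_const, card_univ, kerCard, card_filter,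
          Fintype.card_fun, Fintype.card_fin, nsmul_eq_mul]
        push_cast
        ring

theorem kerCard_mul_card_le {k : ℕ} {M : Matrix (Fin k) (Fin k) F} (hM : M ≠ 0) :
    kerCard M * Fintype.card F ≤ Fintype.card F ^ k := by
  obtain ⟨i, hi⟩ := Function.ne_iff.mp hM
  rw [← card_filter_dotProduct_eq_zero hi]
  refine Nat.mul_le_mul_right _ (card_le_card fun x hx => ?_)
  simp only [mem_filter, mem_univ, true_and] at hx ⊢
  rw [dotProduct_comm]
  exact congr_fun hx i

theorem kerCard_le_of_minor_ne_zero {k : ℕ} {M : Matrix (Fin (k + 2)) (Fin (k + 2)) F}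
    (hM : M 0 0 * M 1 1 ≠ M 0 1 * M 1 0) : kerCard M ≤ Fintype.card F ^ k := by
  have : Fintype.card F ^ k = #(univ : Finset (Fin k → F)) := by simp
  rw [this]
  refine card_le_card_of_injOn (fun x i => x i.succ.succ) (fun _ _ => mem_coe.2 (mem_univ _)) ?_
  intro x hx y hy hxy
  simp only [coe_filter, mem_univ, true_and, Set.mem_ofPred_eq] at hx hy
  have hxy' (i : Fin k) : x i.succ.succ = y i.succ.succ := congr_fun hxy i
  have e (i) : M i 0 * (x 0 - y 0) + M i 1 * (x 1 - y 1) = 0 := by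
    have h := congr_fun (hx.trans hy.symm) i
    simp only [mulVec, dotProduct, Fin.sum_univ_succ, hxy', ← add_assoc, add_left_inj] at h
    simp only [Fin.succ_zero_eq_one] at h
    linear_combination h
  have hd : M 0 0 * M 1 1 - M 0 1 * M 1 0 ≠ 0 := sub_ne_zero.2 hM
  have h0 : x 0 - y 0 = 0 := by
    apply (mul_eq_zero.1 (_ : (M 0 0 * M 1 1 - M 0 1 * M 1 0) * (x 0 - y 0) = 0)).resolve_left hd
    linear_combination M 1 1 * e 0 - M 0 1 * e 1
  have h1 : x 1 - y 1 = 0 := by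
    apply (mul_eq_zero.1 (_ : (M 0 0 * M 1 1 - M 0 1 * M 1 0) * (x 1 - y 1) = 0)).resolve_left hd
    linear_combination M 0 0 * e 1 - M 1 0 * e 0
  ext i
  cases i using Fin.cases with
  | zero => exact sub_eq_zero.1 h0
  | succ i =>
    cases i using Fin.cases with
    | zero => exact sub_eq_zero.1 h1
    | succ i => exact hxy' i

variable (F) in
/-- The square matrices of size `n` with vanishing permanent. -/
def permZero (n : ℕ) : Finset (Matrix (Fin n) (Fin n) F) := {A | A.permanent = 0}

@[simp] theorem mem_permZero {n : ℕ} {A : Matrix (Fin n) (Fin n) F} :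
    A ∈ permZero F n ↔ A.permanent = 0 := by simp [permZero]

theorem card_matrix (F : Type*) [Fintype F] (m n : ℕ) :
    Fintype.card (Matrix (Fin m) (Fin n) F) = Fintype.card F ^ (m * n) := by
  rw [Fintype.card_congr (Matrix.of (m := Fin m) (n := Fin n) (α := F)).symm]
  simp [← pow_mul, mul_comm]

theorem card_permanent_ne_zero (n : ℕ) :
    (#{A : Matrix (Fin n) (Fin n) F | A.permanent ≠ 0} : ℤ) =
      (Fintype.card F : ℤ) ^ n ^ 2 - #(permZero F n) := by
  have h := card_filter_add_card_filter_not (s := (univ : Finset (Matrix (Fin n) (Fin n) F)))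
    (fun A => A.permanent = 0)
  rw [card_univ, card_matrix F, ← sq] at h
  zify at h
  rw [← h, permZero]
  simp

theorem card_filter_eq_sum_bordered {F : Type*} [CommSemiring F] [Fintype F] {n : ℕ}
    (P : Matrix (Fin (n + 1)) (Fin (n + 1)) F → Prop) [DecidablePred P] :
    #{A | P A} = ∑ B : Matrix (Fin n) (Fin n) F,
      #{p : (Fin n → F) × (Fin n → F) × F | P (bordered p.2.2 p.1 p.2.1 B)} := by
  simp only [card_filter]
  rw [← (borderedEquiv F n).sum_comp, Fintype.sum_prod_type]
  rfl

theorem card_fiber_of_permanent_ne_zero {n : ℕ} {B : Matrix (Fin n) (Fin n) F}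
    (hB : B.permanent ≠ 0) :
    #{p : (Fin n → F) × (Fin n → F) × F | (bordered p.2.2 p.1 p.2.1 B).permanent = 0} =
      Fintype.card F ^ (2 * n) := by
  have : Fintype.card F ^ (2 * n) = #(univ : Finset ((Fin n → F) × (Fin n → F))) := by
    simp [two_mul, pow_add]
  rw [this]
  refine card_bij' (fun p _ => (p.1, p.2.1))
    (fun p _ => (p.1, p.2, -(bordered 0 p.1 p.2 B).permanent / B.permanent)) ?_ ?_ ?_ ?_
  · simp
  · intro p _
    rw [mem_filter]
    refine ⟨mem_univ _, ?_⟩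
    rw [permanent_bordered]
    field_simp
    simp
  · rintro ⟨x, y, a⟩ h
    simp only [mem_filter, mem_univ, true_and] at h
    rw [permanent_bordered] at h
    simp only [Prod.mk.injEq, true_and]
    field_simp
    linear_combination -h
  · intro _ _
    rfl

theorem card_fiber_of_permanent_eq_zero {n : ℕ} {B : Matrix (Fin (n + 1)) (Fin (n + 1)) F}
    (hB : B.permanent = 0) :
    (#{p : (Fin (n + 1) → F) × (Fin (n + 1) → F) × F |
        (bordered p.2.2 p.1 p.2.1 B).permanent = 0} : ℤ) =
      (Fintype.card F : ℤ) ^ (2 * (n + 1)) +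
        kerCard B.padj * (Fintype.card F : ℤ) ^ (n + 1) * ((Fintype.card F : ℤ) - 1) := by
  rw [← card_filter_bilin_eq_zero]
  have h (a : F) (x y : Fin (n + 1) → F) :
      (bordered a x y B).permanent = y ⬝ᵥ B.padj *ᵥ x := by
    rw [permanent_bordered, hB, mul_zero, zero_add, permanent_bordered_zero]
  simp only [h]

theorem card_permZero_succ (n : ℕ) :
    (#(permZero F (n + 2)) : ℤ) =
      ((Fintype.card F : ℤ) ^ (n + 1) ^ 2 - #(permZero F (n + 1))) *
          (Fintype.card F : ℤ) ^ (2 * (n + 1)) +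
        ∑ B ∈ permZero F (n + 1), ((Fintype.card F : ℤ) ^ (2 * (n + 1)) +
          kerCard B.padj * (Fintype.card F : ℤ) ^ (n + 1) * ((Fintype.card F : ℤ) - 1)) := by
  rw [permZero, card_filter_eq_sum_bordered,
    ← sum_filter_add_sum_filter_not univ (fun B => B.permanent = 0), add_comm]
  push_cast
  congr 1
  · rw [← card_permanent_ne_zero, ← nsmul_eq_mul, ← sum_const]
    refine sum_congr rfl fun B hB => ?_
    rw [card_fiber_of_permanent_ne_zero (mem_filter.1 hB).2]
    norm_cast
  · exact sum_congr rfl fun B hB => card_fiber_of_permanent_eq_zero (mem_filter.1 hB).2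

/-- All permanental minors of size `k` of the matrix `A` vanish. -/
def MinorsVanish {N : ℕ} (k : ℕ) (A : Matrix (Fin N) (Fin N) F) : Prop :=
  ∀ f g : Fin k → Fin N, f.Injective → g.Injective → (A.submatrix f g).permanent = 0

theorem submatrix_cons_eq_bordered {S : Type*} {N m : ℕ} (A : Matrix (Fin N) (Fin N) S)
    (f g : Fin m → Fin N)
    (i j : Fin N) :
    A.submatrix (Fin.cons i f : Fin (m + 1) → Fin N) (Fin.cons j g : Fin (m + 1) → Fin N) =
      bordered (A i j) (fun l => A i (g l)) (fun k => A (f k) j) (A.submatrix f g) := by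
  ext k l
  cases k using Fin.cases <;> cases l using Fin.cases <;> rfl

theorem card_minor_ne_zero_le {N m : ℕ} {f g : Fin m → Fin N} (hf : f.Injective)
    (hg : g.Injective) (s : Finset (Matrix (Fin N) (Fin N) F))
    (hs : ∀ A ∈ s, (A.submatrix f g).permanent ≠ 0 ∧ MinorsVanish (m + 1) A) :
    #s ≤ Fintype.card F ^ (2 * m * (N - m)) *
      #{B : Matrix (Fin m) (Fin m) F | B.permanent ≠ 0} := by
  have hcard (h : Fin m → Fin N) (hh : h.Injective) :
      Fintype.card {i // i ∉ Set.range h} = N - m := by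
    rw [Fintype.card_subtype_compl, Fintype.card_fin]
    congr 1
    rw [← Fintype.card_congr (Equiv.ofInjective h hh), Fintype.card_fin]
  let T : Finset (((Fin m → {j // j ∉ Set.range g} → F) × ({i // i ∉ Set.range f} → Fin m → F)) ×
    Matrix (Fin m) (Fin m) F) := univ ×ˢ univ.filter fun B => B.permanent ≠ 0
  have hT : #T = Fintype.card F ^ (2 * m * (N - m)) *
      #{B : Matrix (Fin m) (Fin m) F | B.permanent ≠ 0} := by
    rw [show #T = _ from card_product _ _, card_univ, Fintype.card_prod]
    simp only [Fintype.card_fun, hcard f hf, hcard g hg, Fintype.card_fin]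
    congr 1
    rw [← pow_mul, ← pow_mul, ← pow_add]
    congr 1
    ring
  rw [← hT]
  refine card_le_card_of_injOn (fun A => ((fun k j => A (f k) j, fun i l => A i (g l)),
    A.submatrix f g)) (fun A hA => ?_) ?_
  · simpa [T] using (hs A hA).1
  · intro A hA B hB h
    simp only [Prod.mk.injEq] at h
    obtain ⟨⟨h1, h2⟩, h3⟩ := h
    have e1 (k : Fin m) (l : Fin m) : A (f k) (g l) = B (f k) (g l) := congr_fun₂ h3 k l
    have e2 (k : Fin m) (j : Fin N) : A (f k) j = B (f k) j := by
      by_cases hj : j ∈ Set.range g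
      · obtain ⟨l, rfl⟩ := hj
        exact e1 k l
      · exact congr_fun₂ h1 k ⟨j, hj⟩
    have e3 (i : Fin N) (l : Fin m) : A i (g l) = B i (g l) := by
      by_cases hi : i ∈ Set.range f
      · obtain ⟨k, rfl⟩ := hi
        exact e1 k l
      · exact congr_fun₂ h2 ⟨i, hi⟩ l
    ext i j
    by_cases hi : i ∈ Set.range f
    · obtain ⟨k, rfl⟩ := hi
      exact e2 k j
    by_cases hj : j ∈ Set.range g
    · obtain ⟨l, rfl⟩ := hj
      exact e3 i l
    have hci := Fin.cons_injective_iff.2 ⟨hi, hf⟩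
    have hcj := Fin.cons_injective_iff.2 ⟨hj, hg⟩
    have hA' := (hs A hA).2 _ _ hci hcj
    have hB' := (hs B hB).2 _ _ hci hcj
    rw [submatrix_cons_eq_bordered, permanent_bordered] at hA' hB'
    simp only [← e2, ← e3, ← h3] at hB'
    apply mul_right_cancel₀ (hs A hA).1
    linear_combination hA' - hB'

theorem exists_minorsVanish_succ {F : Type*} [Field F] {n : ℕ}
    {A : Matrix (Fin (n + 1)) (Fin (n + 1)) F}
    (hA : A.padj = 0) :
    ∃ m < n, MinorsVanish (m + 1) A ∧ ∃ f g : Fin m → Fin (n + 1), f.Injective ∧ g.Injective ∧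
      (A.submatrix f g).permanent ≠ 0 := by
  classical
  have hn : ∃ k, MinorsVanish k A :=
    ⟨n, fun f g hf hg => permanent_submatrix_eq_zero_of_padj_eq_zero hA hf hg⟩
  have hle : Nat.find hn ≤ n :=
    Nat.find_min' hn fun f g hf hg => permanent_submatrix_eq_zero_of_padj_eq_zero hA hf hg
  have hspec := Nat.find_spec hn
  have hmin (k : ℕ) (hk : k < Nat.find hn) : ¬MinorsVanish k A := Nat.find_min hn hk
  obtain h0 | ⟨m, hm⟩ : Nat.find hn = 0 ∨ ∃ m, Nat.find hn = m + 1 := by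
    cases Nat.find hn <;> simp
  · rw [h0] at hspec
    have := hspec (fun i => i.elim0) (fun i => i.elim0) (fun i => i.elim0) (fun i => i.elim0)
    rw [permanent_isEmpty] at this
    exact absurd this one_ne_zero
  · rw [hm] at hspec hle hmin
    refine ⟨m, hle, hspec, ?_⟩
    have := hmin m (Nat.lt_succ_self m)
    simp only [MinorsVanish, not_forall] at this
    obtain ⟨f, g, hf, hg, h⟩ := this
    exact ⟨f, g, hf, hg, h⟩

theorem card_padj_eq_zero_le (n : ℕ) :
    #{A : Matrix (Fin (n + 1)) (Fin (n + 1)) F | A.padj = 0} ≤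
      ∑ m ∈ range n, (n + 1).choose m ^ 2 * (Fintype.card F ^ (2 * m * (n + 1 - m)) *
        #{B : Matrix (Fin m) (Fin m) F | B.permanent ≠ 0}) := by
  classical
  let X (m : ℕ) (p : Finset (Fin (n + 1)) × Finset (Fin (n + 1))) :
      Finset (Matrix (Fin (n + 1)) (Fin (n + 1)) F) :=
    {A | MinorsVanish (m + 1) A ∧ ∃ f g : Fin m → Fin (n + 1), f.Injective ∧ g.Injective ∧
      univ.image f = p.1 ∧ univ.image g = p.2 ∧ (A.submatrix f g).permanent ≠ 0}
  have hX (m : ℕ) (p) : #(X m p) ≤ Fintype.card F ^ (2 * m * (n + 1 - m)) *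
      #{B : Matrix (Fin m) (Fin m) F | B.permanent ≠ 0} := by
    obtain h | ⟨A₀, hA₀⟩ := (X m p).eq_empty_or_nonempty
    · simp [h]
    · obtain ⟨-, f, g, hf, hg, hfp, hgp, -⟩ := (mem_filter.1 hA₀).2
      refine card_minor_ne_zero_le hf hg _ fun A hA => ?_
      obtain ⟨hv, f', g', hf', hg', hfp', hgp', hA⟩ := (mem_filter.1 hA).2
      refine ⟨?_, hv⟩
      have hr {a b : Fin m → Fin (n + 1)} (h : univ.image a = univ.image b) :
          Set.range a = Set.range b := by
        rw [← Set.image_univ, ← Set.image_univ, ← coe_univ, ← coe_image, ← coe_image, h]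
      rwa [permanent_submatrix_congr A hf hf' hg hg' (hr (hfp.trans hfp'.symm))
        (hr (hgp.trans hgp'.symm))]
  have hsub : ({A : Matrix (Fin (n + 1)) (Fin (n + 1)) F | A.padj = 0} : Finset _) ⊆
      (range n).biUnion fun m =>
        (powersetCard m univ ×ˢ powersetCard m univ).biUnion (X m) := by
    intro A hA
    obtain ⟨m, hm, hv, f, g, hf, hg, h⟩ := exists_minorsVanish_succ (mem_filter.1 hA).2
    simp only [mem_biUnion, mem_range, mem_product, mem_powersetCard]
    refine ⟨m, hm, (univ.image f, univ.image g), ?_, mem_filter.2 ⟨mem_univ _, hv, f, g, hf, hg,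
      rfl, rfl, h⟩⟩
    simp [card_image_of_injective, hf, hg]
  refine (card_le_card hsub).trans (card_biUnion_le.trans (sum_le_sum fun m _ => ?_))
  refine card_biUnion_le.trans ((sum_le_card_nsmul _ _ _ fun p _ => hX m p).trans_eq ?_)
  simp [sq]

end PermanentCount

namespace PermanentCount

open Matrix Finset

/-- If changing any one coordinate of a solution of `P` destroys it for at most `d` values of the
coordinate, then `P`, when satisfiable, has at least `(q - d) ^ |ι|` solutions. -/
theorem pow_le_card_filter {ι α : Type*} [Fintype ι] [DecidableEq ι] [Fintype α] [DecidableEq α]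
    (d : ℕ) (P : (ι → α) → Prop) [DecidablePred P]
    (h : ∀ a i, P a → #{t | ¬P (Function.update a i t)} ≤ d) {a₀ : ι → α} (h₀ : P a₀) :
    (Fintype.card α - d) ^ Fintype.card ι ≤ #{a | P a} := by
  have key (s : Finset ι) : ∀ a, P a →
      (Fintype.card α - d) ^ #s ≤ #{b | P b ∧ ∀ i ∉ s, b i = a i} := by
    induction s using Finset.induction_on with
    | empty =>
      intro a ha
      rw [card_empty, pow_zero, Nat.one_le_iff_ne_zero, card_ne_zero]
      exact ⟨a, by simp [ha]⟩
    | insert i s hi ih =>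
      intro a ha
      let T : Finset α := {t | P (Function.update a i t)}
      have hT : Fintype.card α - d ≤ #T := by
        have h1 := card_filter_add_card_filter_not (s := (univ : Finset α))
          (fun t => P (Function.update a i t))
        have h2 := h a i ha
        rw [card_univ] at h1
        have h3 : #T = #{t | P (Function.update a i t)} := rfl
        omega
      have hdisj : (T : Set α).PairwiseDisjoint fun t =>
          ({b | P b ∧ ∀ j ∉ s, b j = Function.update a i t j} : Finset (ι → α)) := by
        intro t _ u _ htu
        refine disjoint_left.2 fun b hb hb' => htu ?_
        have h1 := (mem_filter.1 hb).2.2 i hi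
        have h2 := (mem_filter.1 hb').2.2 i hi
        simp only [Function.update_self] at h1 h2
        exact h1.symm.trans h2
      rw [card_insert_of_notMem hi, pow_succ']
      calc (Fintype.card α - d) * (Fintype.card α - d) ^ #s
          ≤ #T * (Fintype.card α - d) ^ #s := Nat.mul_le_mul_right _ hT
        _ ≤ ∑ t ∈ T, #{b | P b ∧ ∀ j ∉ s, b j = Function.update a i t j} :=
            card_nsmul_le_sum _ _ _ fun t ht => ih _ (mem_filter.1 ht).2
        _ = _ := (card_biUnion hdisj).symm
        _ ≤ _ := by
          refine card_le_card fun b hb => ?_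
          simp only [mem_biUnion, mem_filter, mem_univ, true_and, mem_insert, not_or] at hb ⊢
          obtain ⟨t, -, hb, hbt⟩ := hb
          refine ⟨hb, fun j hj => ?_⟩
          rw [hbt j hj.2, Function.update_of_ne hj.1]
  simpa using key univ a₀ h₀

theorem card_filter_quadratic_eq_zero_le {F : Type*} [Field F] [Fintype F] [DecidableEq F]
    {φ : F → F} {a b c : F} (hφ : ∀ t, φ t = a + b * t + c * t ^ 2) {t₀ : F} (h₀ : φ t₀ ≠ 0) :
    #{t | φ t = 0} ≤ 2 := by
  let p : Polynomial F := .C a + .C b * .X + .C c * .X ^ 2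
  have hp (t : F) : p.eval t = φ t := by simp [p, hφ]
  have hp0 : p ≠ 0 := fun h => h₀ (by rw [← hp, h, Polynomial.eval_zero])
  refine (Polynomial.card_le_degree_of_subset_roots (p := p) fun t ht => ?_).trans ?_
  · rw [Polynomial.mem_roots hp0, Polynomial.IsRoot.def, hp]
    simpa using ht
  · show Polynomial.natDegree (.C a + .C b * .X + .C c * .X ^ 2) ≤ 2
    compute_degree

/-- Permanental minors are affine functions of each entry. -/
theorem exists_permanent_submatrix_eq_affine {R α β m : Type*} [CommRing R] [Fintype m]
    [DecidableEq m] [DecidableEq β] (A : R → Matrix α β R) (j : β) (u w : α → R)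
    (hj : ∀ t i, A t i j = u i + w i * t) (hne : ∀ t i, ∀ k ≠ j, A t i k = A 0 i k)
    (f : m → α) {g : m → β} (hg : g.Injective) :
    ∃ a b, ∀ t, ((A t).submatrix f g).permanent = a + b * t := by
  by_cases hl : ∃ l, g l = j
  · obtain ⟨l, rfl⟩ := hl
    let c (σ : Equiv.Perm m) : R := ∏ k ∈ Finset.univ.erase l, A 0 (f (σ k)) (g k)
    refine ⟨∑ σ : Equiv.Perm m, u (f (σ l)) * c σ, ∑ σ : Equiv.Perm m, w (f (σ l)) * c σ,
      fun t => ?_⟩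
    rw [permanent, sum_mul, ← sum_add_distrib]
    refine sum_congr rfl fun σ _ => ?_
    rw [← mul_prod_erase univ _ (mem_univ l)]
    simp only [submatrix_apply, hj]
    rw [prod_congr rfl fun k hk => hne t (f (σ k)) (g k) (hg.ne (ne_of_mem_erase hk))]
    simp only [c]
    ring
  · refine ⟨((A 0).submatrix f g).permanent, 0, fun t => ?_⟩
    rw [zero_mul, add_zero]
    congr 1
    ext i k
    exact hne t _ _ fun h => hl ⟨k, h⟩

section CornerFree

variable {R : Type*} [CommRing R] {m : ℕ}

theorem permanent_sub_corner {A B : Matrix (Fin (m + 1)) (Fin (m + 1)) R}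
    (h : ∀ i j, ¬(i = 0 ∧ j = 0) → A i j = B i j) :
    A.permanent - A 0 0 * (A.submatrix Fin.succ Fin.succ).permanent =
      B.permanent - B 0 0 * (B.submatrix Fin.succ Fin.succ).permanent := by
  have key (C : Matrix (Fin (m + 1)) (Fin (m + 1)) R) :
      C.permanent - C 0 0 * (C.submatrix Fin.succ Fin.succ).permanent =
        (bordered 0 (fun j => C 0 j.succ) (fun i => C i.succ 0)
          (C.submatrix Fin.succ Fin.succ)).permanent := by
    have := permanent_bordered (C 0 0) (fun j => C 0 j.succ) (fun i => C i.succ 0)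
      (C.submatrix Fin.succ Fin.succ)
    rw [bordered_self] at this
    rw [this]
    ring
  rw [key, key]
  congr 2
  · ext j
    simp [h]
  · ext i
    simp [h]
  · ext i j
    simp [h]

/-- A polynomial in the entries of `A` other than `A 0 0`, quadratic in each of them, which for
`A.permanent = 0` computes the leading minor of size two of `A.padj`. -/
def cornerForm (A : Matrix (Fin (m + 2)) (Fin (m + 2)) R) : R :=
  -A.permanent * (A.submatrix (Fin.succAbove 1 ∘ Fin.succ) (Fin.succAbove 1 ∘ Fin.succ)).permanent
    + A.padj 0 0 * A.padj 1 1 - A.padj 0 1 * A.padj 1 0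

theorem cornerForm_eq {A B : Matrix (Fin (m + 2)) (Fin (m + 2)) R} (hA : A.permanent = 0)
    (hB : B 0 0 = 0) (h : ∀ i j, ¬(i = 0 ∧ j = 0) → A i j = B i j) :
    cornerForm B = A.padj 0 0 * A.padj 1 1 - A.padj 0 1 * A.padj 1 0 := by
  have h1 := permanent_sub_corner h
  have h2 := permanent_sub_corner (A := A.submatrix (Fin.succAbove 1) (Fin.succAbove 1))
    (B := B.submatrix (Fin.succAbove 1) (Fin.succAbove 1)) fun i j hij => by
      apply h
      rwa [Fin.succAbove_eq_zero_iff one_ne_zero, Fin.succAbove_eq_zero_iff one_ne_zero]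
  have h3 : A.padj 0 0 = B.padj 0 0 := by
    simp only [padj_apply]
    congr 1
    ext i j
    apply h
    simp
  have h4 : A.padj 0 1 = B.padj 0 1 := by
    simp only [padj_apply]
    congr 1
    ext i j
    apply h
    simp
  have h5 : A.padj 1 0 = B.padj 1 0 := by
    simp only [padj_apply]
    congr 1
    ext i j
    apply h
    simp
  have h6 : (A.submatrix (Fin.succAbove 1 ∘ Fin.succ) (Fin.succAbove 1 ∘ Fin.succ)) =
      (B.submatrix (Fin.succAbove 1 ∘ Fin.succ) (Fin.succAbove 1 ∘ Fin.succ)) := by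
    ext i j
    apply h
    simp
  have h7 : (A.submatrix Fin.succ Fin.succ).permanent = A.padj 0 0 := rfl
  rw [hA, hB, h7] at h1
  simp only [submatrix_submatrix, submatrix_apply, hB,
    ← padj_apply, h6, Fin.one_succAbove_zero] at h2
  rw [cornerForm, ← h3, ← h4, ← h5]
  linear_combination (B.submatrix (Fin.succAbove 1 ∘ Fin.succ)
    (Fin.succAbove 1 ∘ Fin.succ)).permanent * h1 - A.padj 0 0 * h2

theorem exists_cornerForm_eq_neg_two (R : Type*) [CommRing R] (m : ℕ) :
    ∃ A : Matrix (Fin (m + 2)) (Fin (m + 2)) R, A 0 0 = 0 ∧ cornerForm A = -2 := by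
  let e : Fin (m + 1) → R := Fin.cons 1 0
  let d : Fin (m + 1) → R := Fin.cons 0 1
  let A := bordered 0 e e (diagonal d)
  have hl (a : R) (x y : Fin (m + 1) → R) (B : Matrix (Fin (m + 1)) (Fin (m + 1)) R) (j) :
      bordered a x y B 1 j = (Fin.cons (y 0) (B 0) : Fin (m + 2) → R) j := rfl
  have hr (a : R) (x y : Fin (m + 1) → R) (B : Matrix (Fin (m + 1)) (Fin (m + 1)) R) (i) :
      bordered a x y B i 1 = (Fin.cons (x 0) fun k => B k 0 : Fin (m + 2) → R) i := by
    cases i using Fin.cases <;> rfl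
  have hsub : (diagonal d).submatrix Fin.succ Fin.succ = (1 : Matrix (Fin m) (Fin m) R) := by
    ext i j
    simp [d, diagonal_apply, one_apply]
  have hd : (diagonal d).permanent = 0 := by
    simp [d, Fin.prod_univ_succ]
  have hper : A.permanent = 1 := by
    rw [permanent_bordered_zero]
    simp only [dotProduct, mulVec, Fin.sum_univ_succ, e, Fin.cons_zero, Fin.cons_succ,
      padj_apply]
    simp [hsub, Fin.succAbove_zero]
  have h00 : A.padj 0 0 = 0 := hd
  have h01 : A.padj 0 1 = 1 := by
    have h : A.submatrix (Fin.succAbove 0) (Fin.succAbove 1) = 1 := by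
      ext i j
      cases i using Fin.cases <;> cases j using Fin.cases <;>
        simp [A, e, d, diagonal_apply, one_apply, Fin.succ_ne_zero,
          (Fin.succ_ne_zero _).symm, hl]
    rw [padj_apply, h, permanent_one]
  have h10 : A.padj 1 0 = 1 := by
    have h : A.submatrix (Fin.succAbove 1) (Fin.succAbove 0) = 1 := by
      ext i j
      cases i using Fin.cases <;> cases j using Fin.cases <;>
        simp [A, e, d, diagonal_apply, one_apply, Fin.succ_ne_zero,
          (Fin.succ_ne_zero _).symm, hr]
    rw [padj_apply, h, permanent_one]
  have h' : A.submatrix (Fin.succAbove 1 ∘ Fin.succ) (Fin.succAbove 1 ∘ Fin.succ) = 1 := by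
    ext i j
    simp [A, d, diagonal_apply, one_apply]
  refine ⟨A, rfl, ?_⟩
  rw [cornerForm, hper, h00, h01, h10, h', permanent_one]
  ring

end CornerFree

end PermanentCount

namespace PermanentCount

open Matrix Finset

/-- The matrix with vanishing top left entry and prescribed other entries. -/
def cornerFree {R : Type*} [Zero R] {N : ℕ} [NeZero N]
    (v : {p : Fin N × Fin N // p ≠ (0, 0)} → R) : Matrix (Fin N) (Fin N) R :=
  of fun i j => if h : (i, j) ≠ (0, 0) then v ⟨(i, j), h⟩ else 0

theorem cornerFree_apply {R : Type*} [Zero R] {N : ℕ} [NeZero N]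
    (v : {p : Fin N × Fin N // p ≠ (0, 0)} → R) (i j : Fin N) :
    cornerFree v i j = if h : (i, j) ≠ (0, 0) then v ⟨(i, j), h⟩ else 0 := rfl

theorem cornerFree_zero_zero {R : Type*} [Zero R] {N : ℕ} [NeZero N]
    (v : {p : Fin N × Fin N // p ≠ (0, 0)} → R) : cornerFree v 0 0 = 0 := by
  simp [cornerFree_apply]

variable {F : Type*} [Field F]

theorem exists_cornerForm_update_eq_quadratic {m : ℕ}
    (v : {p : Fin (m + 2) × Fin (m + 2) // p ≠ (0, 0)} → F)
    (p : {p : Fin (m + 2) × Fin (m + 2) // p ≠ (0, 0)}) :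
    ∃ a b c, ∀ t, cornerForm (cornerFree (Function.update v p t)) = a + b * t + c * t ^ 2 := by
  obtain ⟨⟨i, j⟩, hp⟩ := p
  have key {k : ℕ} (f : Fin k → Fin (m + 2)) {g : Fin k → Fin (m + 2)} (hg : g.Injective) :
      ∃ a b, ∀ t, ((cornerFree (Function.update v ⟨(i, j), hp⟩ t)).submatrix f g).permanent =
        a + b * t := by
    refine exists_permanent_submatrix_eq_affine
      (fun t => cornerFree (Function.update v ⟨(i, j), hp⟩ t)) j
      (fun l => if l = i then 0 else cornerFree v l j) (fun l => if l = i then 1 else 0)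
      (fun t l => ?_) (fun t l k hk => ?_) f hg
    · by_cases hl : l = i
      · subst hl
        simp [cornerFree_apply, hp]
      · simp [cornerFree_apply, hl]
    · simp [cornerFree_apply, hk]
  obtain ⟨a₁, b₁, h₁⟩ := key id Function.injective_id
  obtain ⟨a₂, b₂, h₂⟩ := key (Fin.succAbove 1 ∘ Fin.succ)
    (g := (Fin.succAbove 1 ∘ Fin.succ : Fin m → Fin (m + 2)))
    (Fin.succAbove_right_injective.comp (Fin.succ_injective _))
  have key' (r s : Fin (m + 2)) :
      ∃ a b, ∀ t, (cornerFree (Function.update v ⟨(i, j), hp⟩ t)).padj r s = a + b * t :=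
    key r.succAbove Fin.succAbove_right_injective
  obtain ⟨a₃, b₃, h₃⟩ := key' 0 0
  obtain ⟨a₄, b₄, h₄⟩ := key' 1 1
  obtain ⟨a₅, b₅, h₅⟩ := key' 0 1
  obtain ⟨a₆, b₆, h₆⟩ := key' 1 0
  refine ⟨-a₁ * a₂ + a₃ * a₄ - a₅ * a₆,
    -a₁ * b₂ - b₁ * a₂ + a₃ * b₄ + b₃ * a₄ - a₅ * b₆ - b₅ * a₆,
    -b₁ * b₂ + b₃ * b₄ - b₅ * b₆, fun t => ?_⟩
  simp only [submatrix_id_id] at h₁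
  rw [cornerForm, h₁, h₂, h₃, h₄, h₅, h₆]
  ring

variable [Fintype F] [DecidableEq F]

theorem card_offCorner (m : ℕ) :
    Fintype.card {p : Fin (m + 1) × Fin (m + 1) // p ≠ (0, 0)} = (m + 1) ^ 2 - 1 := by
  rw [Fintype.card_subtype_compl, Fintype.card_subtype_eq]
  simp [sq]

theorem le_card_cornerForm_ne_zero (h2 : (2 : F) ≠ 0) (m : ℕ) :
    (Fintype.card F - 2) ^ ((m + 2) ^ 2 - 1) ≤
      #{v : {p : Fin (m + 2) × Fin (m + 2) // p ≠ (0, 0)} → F | cornerForm (cornerFree v) ≠ 0} := by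
  obtain ⟨A, hA0, hA⟩ := exists_cornerForm_eq_neg_two F m
  rw [← card_offCorner (m + 1)]
  refine pow_le_card_filter 2 (fun v => cornerForm (cornerFree v) ≠ 0) (fun v p hv => ?_)
    (a₀ := fun p => A p.1.1 p.1.2) ?_
  · obtain ⟨a, b, c, h⟩ := exists_cornerForm_update_eq_quadratic v p
    simp only [not_not]
    refine card_filter_quadratic_eq_zero_le h (t₀ := v p) ?_
    rwa [Function.update_eq_self]
  · have : (cornerFree fun p => A p.1.1 p.1.2) = A := by
      ext i j
      rw [cornerFree_apply]
      split_ifs with h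
      · rfl
      · simp only [ne_eq, Prod.mk.injEq, not_not] at h
        rw [h.1, h.2, hA0]
    rw [this, hA]
    simpa using h2

theorem card_minor_eq_zero_corner_ne_zero_le (h2 : (2 : F) ≠ 0) (m : ℕ) :
    #{A : Matrix (Fin (m + 2)) (Fin (m + 2)) F | (A.permanent = 0 ∧
        A.padj 0 0 * A.padj 1 1 = A.padj 0 1 * A.padj 1 0) ∧
        (A.submatrix Fin.succ Fin.succ).permanent ≠ 0} +
      (Fintype.card F - 2) ^ ((m + 2) ^ 2 - 1) ≤ Fintype.card F ^ ((m + 2) ^ 2 - 1) := by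
  have htot := card_filter_add_card_filter_not
    (s := (univ : Finset ({p : Fin (m + 2) × Fin (m + 2) // p ≠ (0, 0)} → F)))
    (fun v => cornerForm (cornerFree v) = 0)
  rw [card_univ, Fintype.card_fun, card_offCorner (m + 1)] at htot
  rw [← htot]
  refine Nat.add_le_add ?_ (le_card_cornerForm_ne_zero h2 m)
  have agree (A : Matrix (Fin (m + 2)) (Fin (m + 2)) F) (i j : Fin (m + 2))
      (h : ¬(i = 0 ∧ j = 0)) : A i j = cornerFree (fun p => A p.1.1 p.1.2) i j := by
    rw [cornerFree_apply, dif_pos (by simpa using h)]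
  refine card_le_card_of_injOn (fun A p => A p.1.1 p.1.2) (fun A hA => ?_) fun A hA B hB hAB => ?_
  · simp only [coe_filter, mem_univ, true_and, Set.mem_ofPred_eq] at hA ⊢
    rw [cornerForm_eq hA.1.1 (cornerFree_zero_zero _) (agree A), sub_eq_zero]
    exact hA.1.2
  · simp only [coe_filter, mem_univ, true_and, Set.mem_ofPred_eq] at hA hB
    have hne (i j : Fin (m + 2)) (h : ¬(i = 0 ∧ j = 0)) : A i j = B i j :=
      congr_fun hAB ⟨(i, j), by simpa using h⟩
    have hsub : A.submatrix Fin.succ Fin.succ = B.submatrix Fin.succ Fin.succ := by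
      ext i j
      exact hne _ _ (by simp)
    have h := permanent_sub_corner hne
    rw [hA.1.1, hB.1.1, hsub] at h
    have h00 : A 0 0 = B 0 0 := by
      apply mul_right_cancel₀ hB.2
      linear_combination -h
    ext i j
    by_cases hij : i = 0 ∧ j = 0
    · rw [hij.1, hij.2, h00]
    · exact hne i j hij

end PermanentCount

namespace PermanentCount

open Matrix Finset

theorem mul_vAux {q : ℤ} {k r : ℕ} (h : r ≤ k) :
    q * vAux q k r = q ^ (2 * k) + q ^ (k - r) * q ^ k * (q - 1) := by
  obtain ⟨s, rfl⟩ := Nat.exists_eq_add_of_le h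
  rw [vAux, Nat.add_sub_cancel_left]
  cases r with
  | zero =>
    simp
    ring
  | succ r =>
    rw [Nat.add_sub_cancel]
    ring

theorem vAux_nonneg {q : ℤ} (hq : 1 ≤ q) (k r : ℕ) : 0 ≤ vAux q k r := by
  have h : 0 ≤ q ^ r - 1 := sub_nonneg.2 (one_le_pow₀ hq)
  unfold vAux
  positivity

theorem sum_ite_eq_zero {F : Type*} [Zero F] [Fintype F] [DecidableEq F] (u v : ℤ) :
    ∑ t : F, (if t = 0 then u else v) = u + ((Fintype.card F : ℤ) - 1) * v := by
  have h (t : F) : (if t = 0 then u else v) = v + if t = 0 then u - v else 0 := by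
    split_ifs <;> ring
  simp only [h, sum_add_distrib, sum_const, card_univ, sum_ite_eq', mem_univ, if_true,
    nsmul_eq_mul]
  ring

theorem mul_vAux_nonneg {F : Type*} [Nonempty F] [Fintype F] (k r : ℕ) :
    0 ≤ (Fintype.card F : ℤ) * vAux (Fintype.card F) k r :=
  mul_nonneg (by positivity) (vAux_nonneg (by exact_mod_cast Fintype.card_pos) k r)

variable {F : Type*} [Field F] [Fintype F] [DecidableEq F]

theorem fiber_le_mul_vAux {k r : ℕ} {M : Matrix (Fin k) (Fin k) F} (hr : r ≤ k)
    (h : kerCard M ≤ Fintype.card F ^ (k - r)) :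
    (Fintype.card F : ℤ) ^ (2 * k) +
        kerCard M * (Fintype.card F : ℤ) ^ k * ((Fintype.card F : ℤ) - 1) ≤
      Fintype.card F * vAux (Fintype.card F) k r := by
  have hq : 0 ≤ (Fintype.card F : ℤ) - 1 := by
    have := Fintype.card_pos (α := F)
    omega
  rw [mul_vAux hr]
  gcongr
  exact_mod_cast h

theorem kerCard_le {k : ℕ} (M : Matrix (Fin k) (Fin k) F) :
    kerCard M ≤ Fintype.card F ^ k :=
  (card_le_univ _).trans_eq (by simp)

theorem kerCard_le_of_ne_zero {k : ℕ} {M : Matrix (Fin (k + 1)) (Fin (k + 1)) F} (hM : M ≠ 0) :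
    kerCard M ≤ Fintype.card F ^ k := by
  have := kerCard_mul_card_le hM
  rw [pow_succ] at this
  exact Nat.le_of_mul_le_mul_right this Fintype.card_pos

theorem sum_permZero_fiber_le (n : ℕ) :
    ∑ B ∈ permZero F (n + 1), ((Fintype.card F : ℤ) ^ (2 * (n + 1)) +
        kerCard B.padj * (Fintype.card F : ℤ) ^ (n + 1) * ((Fintype.card F : ℤ) - 1)) ≤
      #{B : Matrix (Fin (n + 1)) (Fin (n + 1)) F | B.padj = 0} *
          (Fintype.card F : ℤ) ^ (2 * (n + 1) + 1) +
        #(permZero F (n + 1)) * (Fintype.card F * vAux (Fintype.card F) (n + 1) 1) := by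
  have h1 := mul_vAux_nonneg (F := F) (n + 1) 1
  calc _ ≤ ∑ B ∈ permZero F (n + 1), ((if B.padj = 0 then
          (Fintype.card F : ℤ) ^ (2 * (n + 1) + 1) else 0) +
          Fintype.card F * vAux (Fintype.card F) (n + 1) 1) := by
        refine sum_le_sum fun B _ => ?_
        split_ifs with h
        · have h0 := fiber_le_mul_vAux (Nat.zero_le _) (kerCard_le B.padj)
          rw [vAux] at h0
          refine le_add_of_le_of_nonneg (h0.trans_eq ?_) h1
          simp
          ring
        · rw [zero_add]
          exact fiber_le_mul_vAux (by omega) (kerCard_le_of_ne_zero h)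
    _ ≤ _ := by
        rw [sum_add_distrib, sum_const, nsmul_eq_mul]
        gcongr
        calc _ ≤ ∑ B : Matrix (Fin (n + 1)) (Fin (n + 1)) F, (if B.padj = 0 then
              (Fintype.card F : ℤ) ^ (2 * (n + 1) + 1) else 0) :=
              sum_le_univ_sum_of_nonneg fun B => by positivity
          _ = _ := by rw [← sum_filter, sum_const, nsmul_eq_mul]

theorem sum_permZero_fiber_le' (n : ℕ) :
    ∑ B ∈ permZero F (n + 2), ((Fintype.card F : ℤ) ^ (2 * (n + 2)) +
        kerCard B.padj * (Fintype.card F : ℤ) ^ (n + 2) * ((Fintype.card F : ℤ) - 1)) ≤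
      #{B : Matrix (Fin (n + 2)) (Fin (n + 2)) F | B.padj = 0} *
          (Fintype.card F * vAux (Fintype.card F) (n + 2) 0) +
        #{B : Matrix (Fin (n + 2)) (Fin (n + 2)) F | B.permanent = 0 ∧
          B.padj 0 0 * B.padj 1 1 = B.padj 0 1 * B.padj 1 0} *
          (Fintype.card F * vAux (Fintype.card F) (n + 2) 1) +
        #(permZero F (n + 2)) * (Fintype.card F * vAux (Fintype.card F) (n + 2) 2) := by
  have h0 := mul_vAux_nonneg (F := F) (n + 2) 0
  have h1 := mul_vAux_nonneg (F := F) (n + 2) 1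
  have h2 := mul_vAux_nonneg (F := F) (n + 2) 2
  calc _ ≤ ∑ B ∈ permZero F (n + 2), (((if B.padj = 0 then
          (Fintype.card F : ℤ) * vAux (Fintype.card F) (n + 2) 0 else 0) +
          (if B.padj 0 0 * B.padj 1 1 = B.padj 0 1 * B.padj 1 0 then
            (Fintype.card F : ℤ) * vAux (Fintype.card F) (n + 2) 1 else 0)) +
          Fintype.card F * vAux (Fintype.card F) (n + 2) 2) := by
        refine sum_le_sum fun B _ => ?_
        by_cases h : B.padj = 0
        · have := fiber_le_mul_vAux (Nat.zero_le _) (kerCard_le B.padj)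
          rw [if_pos h]
          split_ifs <;> linarith
        · rw [if_neg h]
          split_ifs with h'
          · have := fiber_le_mul_vAux (M := B.padj) (r := 1) (by omega) (kerCard_le_of_ne_zero h)
            linarith
          · have := fiber_le_mul_vAux (M := B.padj) (r := 2) (by omega)
              (kerCard_le_of_minor_ne_zero h')
            linarith
    _ ≤ _ := by
        rw [sum_add_distrib, sum_add_distrib, sum_const, nsmul_eq_mul]
        gcongr
        · calc _ ≤ ∑ B : Matrix (Fin (n + 2)) (Fin (n + 2)) F, (if B.padj = 0 then
                (Fintype.card F : ℤ) * vAux (Fintype.card F) (n + 2) 0 else 0) :=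
                sum_le_univ_sum_of_nonneg fun B => by split_ifs <;> simp [h0]
            _ = _ := by rw [← sum_filter, sum_const, nsmul_eq_mul]
        · rw [permZero, ← sum_filter, filter_filter, sum_const, nsmul_eq_mul]

theorem card_minor_eq_zero_le (hq : 3 ≤ Fintype.card F) (h2 : (2 : F) ≠ 0) (m : ℕ) :
    (#{A : Matrix (Fin (m + 2)) (Fin (m + 2)) F | A.permanent = 0 ∧
        A.padj 0 0 * A.padj 1 1 = A.padj 0 1 * A.padj 1 0} : ℤ) ≤
      ((Fintype.card F : ℤ) ^ ((m + 2) ^ 2 - 1) -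
          ((Fintype.card F : ℤ) - 3) ^ ((m + 2) ^ 2 - 1)) +
        #{B : Matrix (Fin (m + 1)) (Fin (m + 1)) F | B.padj = 0} *
          (Fintype.card F : ℤ) ^ (2 * (m + 1) + 1) +
        #(permZero F (m + 1)) * (Fintype.card F * vAux (Fintype.card F) (m + 1) 1) := by
  rw [← card_filter_add_card_filter_not (fun A => (A.submatrix Fin.succ Fin.succ).permanent ≠ 0),
    filter_filter, filter_filter]
  push_cast
  refine (add_le_add ?_ ?_).trans_eq (add_assoc _ _ _).symm
  · have h := card_minor_eq_zero_corner_ne_zero_le h2 m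
    have h3 : ((Fintype.card F : ℤ) - 3) ^ ((m + 2) ^ 2 - 1) ≤
        ((Fintype.card F : ℤ) - 2) ^ ((m + 2) ^ 2 - 1) :=
      pow_le_pow_left₀ (by omega) (by omega) _
    zify [show 2 ≤ Fintype.card F by omega] at h
    linarith
  · refine le_trans ?_ (sum_permZero_fiber_le m)
    calc _ ≤ (#{A : Matrix (Fin (m + 2)) (Fin (m + 2)) F | A.permanent = 0 ∧
          (A.submatrix Fin.succ Fin.succ).permanent = 0} : ℤ) := by
          exact_mod_cast card_le_card fun A hA => by simp_all
      _ = _ := by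
          rw [card_filter_eq_sum_bordered, permZero, sum_filter]
          push_cast
          refine sum_congr rfl fun B _ => ?_
          split_ifs with h
          · rw [← card_fiber_of_permanent_eq_zero h]
            congr 2
            ext p
            simp only [mem_filter]
            exact and_congr_right fun _ => and_iff_left h
          · rw [Nat.cast_eq_zero, card_eq_zero, filter_eq_empty_iff]
            exact fun p _ hp => h hp.2

end PermanentCount

namespace PermanentCount

open Matrix Finset

theorem permanent_fin_two {R : Type*} [CommSemiring R] (a b c d : R) :
    !![a, b; c, d].permanent = a * d + b * c := by
  simp [permanent_succ_row_zero, Fin.sum_univ_succ]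

theorem padj_fin_two_mulVec {R : Type*} [CommSemiring R] (a b c d x y : R) :
    !![a, b; c, d].padj *ᵥ ![x, y] = ![d * x + c * y, b * x + a * y] := by
  ext i
  fin_cases i <;>
    simp [mulVec, dotProduct, padj_apply, Fin.sum_univ_succ, permanent_unique]

variable {F : Type*} [Field F] [Fintype F] [DecidableEq F]

variable (F) in
theorem card_permZero_one : #(permZero F 1) = 1 := by
  refine card_eq_one.2 ⟨0, ?_⟩
  ext A
  rw [mem_permZero, mem_singleton, permanent_unique, ← ext_iff]
  simp [Fin.forall_fin_one]

variable (F) in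
theorem card_permZero_two :
    (#(permZero F 2) : ℤ) =
      (Fintype.card F : ℤ) ^ 3 + (Fintype.card F : ℤ) ^ 2 - Fintype.card F := by
  have h (B : Matrix (Fin 1) (Fin 1) F) : kerCard B.padj = 1 := by
    have hB : B.padj = 1 := by
      ext i j
      fin_cases i
      fin_cases j
      simp [padj_apply, permanent_isEmpty]
    simp [kerCard, hB, filter_eq']
  rw [card_permZero_succ 0]
  simp only [zero_add, h, sum_const, nsmul_eq_mul]
  rw [card_permZero_one]
  push_cast
  ring

theorem card_mul_eq_zero :
    (#{p : F × F | p.1 * p.2 = 0} : ℤ) = 2 * Fintype.card F - 1 := by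
  have h (a : F) : ((∑ b : F, if a * b = 0 then 1 else 0 : ℕ) : ℤ) =
      if a = 0 then (Fintype.card F : ℤ) else 1 := by
    split_ifs with ha <;> simp [ha]
  rw [card_filter, Fintype.sum_prod_type]
  push_cast at h ⊢
  simp only [h, sum_ite_eq_zero]
  ring

theorem card_permanent_eq_zero_padj_mulVec_eq_zero (h2 : (2 : F) ≠ 0) (x y : F) :
    (#{B : Matrix (Fin 2) (Fin 2) F | B.permanent = 0 ∧ B.padj *ᵥ ![x, y] = 0} : ℤ) =
      if x = 0 then (if y = 0 then (#(permZero F 2) : ℤ) else (Fintype.card F : ℤ) ^ 2)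
      else (if y = 0 then (Fintype.card F : ℤ) ^ 2 else 2 * Fintype.card F - 1) := by
  have hc : (Fintype.card F : ℤ) ^ 2 = #(univ : Finset (F × F)) := by
    simp [sq]
  have hB (B : Matrix (Fin 2) (Fin 2) F) : B.permanent = 0 ∧ B.padj *ᵥ ![x, y] = 0 ↔
      B 0 0 * B 1 1 + B 0 1 * B 1 0 = 0 ∧
        B 1 1 * x + B 1 0 * y = 0 ∧ B 0 1 * x + B 0 0 * y = 0 := by
    rw [B.eta_fin_two, permanent_fin_two, padj_fin_two_mulVec]
    simp
  split_ifs with hx hy hy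
  · subst hx hy
    simp [permZero]
  · rw [hc]
    norm_cast
    refine card_bij' (fun B _ => (B 0 1, B 1 1)) (fun p _ => !![0, p.1; 0, p.2]) ?_ ?_ ?_ ?_
    · simp
    · intro p _
      simp only [mem_filter, hB]
      simp [hx]
    · intro B h
      simp only [mem_filter, mem_univ, true_and, hB] at h
      simp only [hx, mul_zero, zero_add, mul_eq_zero, hy, or_false] at h
      rw [B.eta_fin_two]
      simp [h]
    · simp
  all_goals
    have hE : #{B : Matrix (Fin 2) (Fin 2) F | B.permanent = 0 ∧ B.padj *ᵥ ![x, y] = 0} =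
        #{p : F × F | p.1 * p.2 * y = 0} := by
      refine card_bij' (fun B _ => (B 0 0, B 1 0))
        (fun p _ => !![p.1, - p.1 * y / x; p.2, - p.2 * y / x]) ?_ ?_ ?_ ?_
      · intro B h
        simp only [mem_filter, mem_univ, true_and, hB] at h ⊢
        obtain ⟨h, h', h''⟩ := h
        apply mul_left_cancel₀ h2
        linear_combination - x * h + B 0 0 * h' + B 1 0 * h''
      · intro p h
        simp only [mem_filter, mem_univ, true_and, hB] at h ⊢
        simp
        field_simp
        refine ⟨?_, by ring, by ring⟩
        linear_combination - 2 * h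
      · intro B h
        simp only [mem_filter, mem_univ, true_and, hB] at h ⊢
        ext i j
        fin_cases i <;> fin_cases j <;> simp <;> field_simp
        · linear_combination - h.2.2
        · linear_combination - h.2.1
      · simp
    rw [hE]
  · simp [hy, sq]
  · simp only [mul_eq_zero (b := y), hy, or_false, card_mul_eq_zero]

theorem sum_kerCard_padj_two (h2 : (2 : F) ≠ 0) :
    ∑ B ∈ permZero F 2, (kerCard B.padj : ℤ) =
      #(permZero F 2) + ((Fintype.card F : ℤ) - 1) ^ 2 * (2 * Fintype.card F - 1) +
        2 * ((Fintype.card F : ℤ) - 1) * (Fintype.card F : ℤ) ^ 2 := by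
  calc _ = ∑ v : Fin 2 → F,
        (#{B : Matrix (Fin 2) (Fin 2) F | B.permanent = 0 ∧ B.padj *ᵥ v = 0} : ℤ) := by
        simp only [kerCard, card_filter, permZero, ite_and]
        push_cast
        rw [sum_comm]
        exact sum_congr rfl fun v _ => sum_filter _ _
    _ = ∑ x : F, ∑ y : F,
        (#{B : Matrix (Fin 2) (Fin 2) F | B.permanent = 0 ∧ B.padj *ᵥ ![x, y] = 0} : ℤ) := by
        rw [← (finTwoArrowEquiv F).symm.sum_comp, Fintype.sum_prod_type]
        rfl
    _ = _ := by
        have h (x : F) : (∑ y : F, if x = 0 then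
              (if y = 0 then (#(permZero F 2) : ℤ) else (Fintype.card F : ℤ) ^ 2)
            else (if y = 0 then (Fintype.card F : ℤ) ^ 2 else 2 * Fintype.card F - 1)) =
            if x = 0 then #(permZero F 2) + ((Fintype.card F : ℤ) - 1) * Fintype.card F ^ 2
            else Fintype.card F ^ 2 + ((Fintype.card F : ℤ) - 1) * (2 * Fintype.card F - 1) := by
          split_ifs <;> rw [sum_ite_eq_zero]
        simp only [card_permanent_eq_zero_padj_mulVec_eq_zero h2, h, sum_ite_eq_zero]
        ring

theorem card_permZero_three (h2 : (2 : F) ≠ 0) :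
    (#(permZero F 3) : ℤ) =
      (Fintype.card F : ℤ) ^ 9 - ((Fintype.card F : ℤ) ^ 3 - 1) *
          ((Fintype.card F : ℤ) ^ 3 - Fintype.card F) *
          ((Fintype.card F : ℤ) ^ 3 - (Fintype.card F : ℤ) ^ 2) -
        (Fintype.card F : ℤ) ^ 2 * ((Fintype.card F : ℤ) - 1) ^ 5 := by
  rw [card_permZero_succ 1, sum_add_distrib, sum_const, ← sum_mul, ← sum_mul,
    sum_kerCard_padj_two h2, nsmul_eq_mul, card_permZero_two]
  ring

end PermanentCount

namespace PermanentCount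

open Matrix Finset

variable {F : Type*} [Field F] [Fintype F] [DecidableEq F]

theorem card_padj_eq_zero_le_of_le {l : ℕ → ℤ} {n : ℕ}
    (hl : ∀ m, 1 ≤ m → m ≤ n → l m ≤ #(permZero F m)) :
    (#{A : Matrix (Fin (n + 2)) (Fin (n + 2)) F | A.padj = 0} : ℤ) ≤
      1 + ∑ k ∈ Icc 1 n, ((n + 2).choose (n + 1 - k) : ℤ) ^ 2 *
        (Fintype.card F : ℤ) ^ (2 * (n + 1 - k) * (k + 1)) *
          ((Fintype.card F : ℤ) ^ ((n + 1 - k) ^ 2) - l (n + 1 - k)) := by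
  refine (Nat.cast_le.2 (card_padj_eq_zero_le (n + 1))).trans ?_
  rw [sum_range_succ', add_comm]
  push_cast
  refine add_le_add ?_ ?_
  · simp [permanent_isEmpty, card_matrix F]
  · simp only [card_permanent_ne_zero]
    calc _ ≤ ∑ i ∈ range n, ((n + 2).choose (n + 1 - (n - i)) : ℤ) ^ 2 *
          (Fintype.card F : ℤ) ^ (2 * (n + 1 - (n - i)) * (n - i + 1)) *
            ((Fintype.card F : ℤ) ^ ((n + 1 - (n - i)) ^ 2) - l (n + 1 - (n - i))) := by
          refine sum_le_sum fun i hi => ?_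
          have hi := mem_range.1 hi
          have hm : n + 1 - (n - i) = i + 1 := by omega
          have hk : n - i + 1 = n + 1 - i := by omega
          rw [hm, hk, ← mul_assoc]
          gcongr
          exact hl _ (by omega) (by omega)
      _ = _ := by
          refine sum_nbij' (n - ·) (n - ·) ?_ ?_ ?_ ?_ fun i _ => rfl <;>
            simp only [mem_range, mem_Icc] <;> omega

end PermanentCount

/-- Let `𝔏, 𝔘, 𝔑⁽⁰⁾, 𝔑⁽¹⁾` be the recursively defined bounding functions. For every
finite field `F` with `|F| = q > 3` and `char F ≠ 2`, and every `n ≥ 1`,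
`𝔏ₙ(q) ≤ |Pₙ(F)| ≤ 𝔘ₙ(q)`. -/
theorem permanent_zero_card_bounds
    (L U N0 N1 : ℕ → ℤ → ℤ)
    (hL1 : ∀ q, L 1 q = 0) (hL2 : ∀ q, L 2 q = 0)
    (hU1 : ∀ q, U 1 q = 1) (hU2 : ∀ q, U 2 q = q ^ 3 + q ^ 2 - q)
    (hL3 : ∀ q, L 3 q =
      q ^ 9 - (q ^ 3 - 1) * (q ^ 3 - q) * (q ^ 3 - q ^ 2) - q ^ 2 * (q - 1) ^ 5)
    (hU3 : ∀ q, U 3 q =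
      q ^ 9 - (q ^ 3 - 1) * (q ^ 3 - q) * (q ^ 3 - q ^ 2) - q ^ 2 * (q - 1) ^ 5)
    (hN0two : ∀ q, N0 2 q = 1)
    (hN0 : ∀ n, 4 ≤ n → ∀ q, N0 (n - 1) q =
      1 + ∑ k ∈ Finset.Icc 1 (n - 3),
        ((n - 1).choose (n - k - 2) : ℤ) ^ 2 * q ^ (2 * (n - k - 2) * (k + 1)) *
          (q ^ ((n - k - 2) ^ 2) - L (n - k - 2) q))
    (hN1 : ∀ n, 4 ≤ n → ∀ q, N1 (n - 1) q =
      (q ^ ((n - 1) ^ 2 - 1) - (q - 3) ^ ((n - 1) ^ 2 - 1)) +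
        N0 (n - 2) q * q ^ (2 * (n - 2) + 1) +
        q * U (n - 2) q * vAux q (n - 2) 1)
    (hL : ∀ n, 4 ≤ n → ∀ q, L n q =
      (q ^ ((n - 1) ^ 2) - U (n - 1) q) * q ^ (2 * (n - 1)))
    (hU : ∀ n, 4 ≤ n → ∀ q, U n q =
      (q ^ ((n - 1) ^ 2) - L (n - 1) q) * q ^ (2 * (n - 1)) +
        q * N0 (n - 1) q * vAux q (n - 1) 0 +
        q * N1 (n - 1) q * vAux q (n - 1) 1 +
        q * U (n - 1) q * vAux q (n - 1) 2)
    (F : Type) [Field F] [Fintype F]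
    (hq : 3 < Fintype.card F) (hch : ringChar F ≠ 2) (n : ℕ) (hn : 1 ≤ n) :
    L n (Fintype.card F) ≤
        (Nat.card {A : Matrix (Fin n) (Fin n) F // A.permanent = 0} : ℤ) ∧
      (Nat.card {A : Matrix (Fin n) (Fin n) F // A.permanent = 0} : ℤ) ≤
        U n (Fintype.card F) := by
  classical
  have h2 : (2 : F) ≠ 0 := Ring.two_ne_zero hch
  have hcard (k : ℕ) : Nat.card {A : Matrix (Fin k) (Fin k) F // A.permanent = 0} =
      (PermanentCount.permZero F k).card := by
    rw [Nat.card_eq_fintype_card, Fintype.card_subtype]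
    rfl
  rw [hcard]
  induction n using Nat.strong_induction_on with
  | _ n ih =>
  obtain _ | _ | _ | _ | m := n
  · omega
  · simp [hL1, hU1, PermanentCount.card_permZero_one]
  · rw [zero_add, hL2, hU2, ← PermanentCount.card_permZero_two]
    exact ⟨by positivity, le_rfl⟩
  · rw [zero_add, hL3, hU3, ← PermanentCount.card_permZero_three h2]
    exact ⟨le_rfl, le_rfl⟩
  · have hlow (k : ℕ) (h1 : 1 ≤ k) (hk : k ≤ m + 3) :
        L k (Fintype.card F) ≤ (PermanentCount.permZero F k).card :=
      (ih k (by omega) h1).1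
    have hupp (k : ℕ) (h1 : 1 ≤ k) (hk : k ≤ m + 3) :
        (PermanentCount.permZero F k).card ≤ U k (Fintype.card F) :=
      (ih k (by omega) h1).2
    have hzero (k : ℕ) (hk : k ≤ m + 1) :
        ((Finset.univ.filter fun A : Matrix (Fin (k + 2)) (Fin (k + 2)) F => A.padj = 0).card : ℤ) ≤
          N0 (k + 2) (Fintype.card F) := by
      refine (PermanentCount.card_padj_eq_zero_le_of_le (l := fun j => L j (Fintype.card F))
        fun j h1 hj => hlow j h1 (by omega)).trans_eq ?_
      obtain _ | k := k
      · simp [hN0two]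
      · refine Eq.trans ?_ (hN0 (k + 1 + 3) (by omega) _).symm
        congr 1
        refine Finset.sum_congr rfl fun i _ => ?_
        rw [show k + 1 + 3 - i - 2 = k + 1 + 1 - i by omega]
        rfl
    have hrec := PermanentCount.card_permZero_succ (F := F) (m + 2)
    constructor
    · rw [hL _ (by omega), hrec]
      refine le_add_of_le_of_nonneg ?_ (Finset.sum_nonneg fun B _ => ?_)
      · exact mul_le_mul_of_nonneg_right (sub_le_sub_left (hupp (m + 3) (by omega) le_rfl) _)
          (by positivity)
      · have : (0 : ℤ) ≤ Fintype.card F - 1 := by omega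
        positivity
    · have hv (k r : ℕ) := PermanentCount.mul_vAux_nonneg (F := F) k r
      have hN1' := hN1 (m + 4) (by omega) (Fintype.card F)
      have hU' := hU (m + 4) (by omega) (Fintype.card F)
      simp only [show m + 4 - 1 = m + 3 from rfl, show m + 4 - 2 = m + 2 from rfl] at hN1' hU'
      have hone :=
        (PermanentCount.card_minor_eq_zero_le hq.le h2 (m + 1)).trans ((add_le_add
          (add_le_add le_rfl (mul_le_mul_of_nonneg_right (hzero m (by omega)) (by positivity)))
          (mul_le_mul_of_nonneg_right (hupp (m + 2) (by omega) (by omega)) (hv _ _))).trans_eq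
            (Eq.trans (by ring) hN1'.symm))
      rw [hrec]
      refine (add_le_add
        (mul_le_mul_of_nonneg_right (sub_le_sub_left (hlow (m + 3) (by omega) le_rfl) _)
          (by positivity))
        ((PermanentCount.sum_permZero_fiber_le' (m + 1)).trans (add_le_add (add_le_add
          (mul_le_mul_of_nonneg_right (hzero (m + 1) le_rfl) (hv _ _))
          (mul_le_mul_of_nonneg_right hone (hv _ _)))
          (mul_le_mul_of_nonneg_right (hupp (m + 3) (by omega) le_rfl) (hv _ _))))).trans_eq ?_
      rw [hU']
      ring
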